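/- arXiv:2111.04713 — 9 statements merged into one kernel-verified Lean document; each statement's English description precedes it below -/
import Mathlib

section
/- For every positive integer c, the four-fold complete exponential sum of Kloosterman sums satisfies ∑_{a₁ mod c} ∑_{a₂ mod c} ∑_{b₁ mod c} ∑_{b₂ mod c} S(a₁(a₁+b₁), a₂(a₂+b₂); c) · e_c(2a₁a₂ + a₁b₂ + a₂b₁) = c³·φ(c), where φ is Euler's totient function. -/
open scoped BigOperators

/-- The additive character `e_c(x) = e^{2πi x / c}` evaluated at a residue class mod `c`. -/
noncomputable def ec (c : ℕ) (x : ZMod c) : ℂ :=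
  Complex.exp (2 * Real.pi * Complex.I * (x.val : ℂ) / (c : ℂ))

/-- The classical Kloosterman sum `S(a, b; c) = ∑_{x mod c, (x,c)=1} e_c(a x + b x̄)`. -/
noncomputable def kloostermanS (c : ℕ) [NeZero c] (a b : ZMod c) : ℂ :=
  ∑ x : (ZMod c)ˣ, ec c (a * (x : ZMod c) + b * ((x⁻¹ : (ZMod c)ˣ) : ZMod c))

theorem ec_eq_std (c : ℕ) [NeZero c] (x : ZMod c) : ec c x = ZMod.stdAddChar x := by
  rw [ZMod.stdAddChar_apply, ZMod.toCircle_apply, ec]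

theorem sum_std (c : ℕ) [NeZero c] (b : ZMod c) :
    ∑ x : ZMod c, (ZMod.stdAddChar (x * b) : ℂ) = if b = 0 then (c : ℂ) else 0 := by
  have h := AddChar.sum_mulShift (R' := ℂ) b (ZMod.isPrimitive_stdAddChar c)
  rw [h, ZMod.card]
  split_ifs <;> simp

theorem sum_b (c : ℕ) [NeZero c] (x : (ZMod c)ˣ) (a₁ a₂ : ZMod c) :
    ∑ b₁ : ZMod c, ∑ b₂ : ZMod c,
      (ZMod.stdAddChar (a₁ * (a₁ + b₁) * (x : ZMod c)
        + a₂ * (a₂ + b₂) * ((x⁻¹ : (ZMod c)ˣ) : ZMod c)) : ℂ) *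
        ZMod.stdAddChar (2 * a₁ * a₂ + a₁ * b₂ + a₂ * b₁) =
      if a₂ = - (x * a₁) then (c : ℂ) ^ 2 else 0 := by
  have hx : (x : ZMod c) * ((x⁻¹ : (ZMod c)ˣ) : ZMod c) = 1 := x.mul_inv
  generalize ((x⁻¹ : (ZMod c)ˣ) : ZMod c) = y at hx ⊢
  generalize (x : ZMod c) = x at hx ⊢
  have h : ∀ b₁ b₂ : ZMod c, (ZMod.stdAddChar (a₁ * (a₁ + b₁) * x + a₂ * (a₂ + b₂) * y) : ℂ) *
        ZMod.stdAddChar (2 * a₁ * a₂ + a₁ * b₂ + a₂ * b₁) =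
      ZMod.stdAddChar (a₁ * a₁ * x + a₂ * a₂ * y + 2 * a₁ * a₂) *
        (ZMod.stdAddChar (b₁ * (x * a₁ + a₂)) * ZMod.stdAddChar (b₂ * (y * a₂ + a₁))) := by
    intro b₁ b₂
    simp only [← AddChar.map_add_eq_mul]
    congr 1
    ring
  simp only [h, ← Finset.mul_sum, ← Finset.sum_mul, sum_std]
  by_cases ha : a₂ = - (x * a₁)
  · have h1 : x * a₁ + a₂ = 0 := by rw [ha]; ring
    have h2 : y * a₂ + a₁ = 0 := by rw [ha]; linear_combination (-a₁) * hx
    have h3 : a₁ * a₁ * x + a₂ * a₂ * y + 2 * a₁ * a₂ = 0 := by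
      rw [ha]; linear_combination (a₁ * a₁ * x) * hx
    simp only [h1, h2, h3, if_true, if_pos ha, AddChar.map_zero_eq_one]
    ring
  · have h1 : x * a₁ + a₂ ≠ 0 := fun h => ha (by linear_combination h)
    simp [h1, ha]

/-- For every positive integer `c`,
`∑_{a₁,a₂,b₁,b₂ mod c} S(a₁(a₁+b₁), a₂(a₂+b₂); c) e_c(2a₁a₂ + a₁b₂ + a₂b₁) = c³ φ(c)`. -/
theorem kloosterman_fourfold_sum (c : ℕ) [NeZero c] :
    ∑ a₁ : ZMod c, ∑ a₂ : ZMod c, ∑ b₁ : ZMod c, ∑ b₂ : ZMod c,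
      kloostermanS c (a₁ * (a₁ + b₁)) (a₂ * (a₂ + b₂)) *
        ec c (2 * a₁ * a₂ + a₁ * b₂ + a₂ * b₁) =
      (c : ℂ) ^ 3 * (Nat.totient c : ℂ) := by
  simp only [kloostermanS, ec_eq_std, Finset.sum_mul]
  have h : ∀ a₁ a₂ : ZMod c, ∑ b₁ : ZMod c, ∑ b₂ : ZMod c, ∑ x : (ZMod c)ˣ,
      (ZMod.stdAddChar (a₁ * (a₁ + b₁) * (x : ZMod c)
        + a₂ * (a₂ + b₂) * ((x⁻¹ : (ZMod c)ˣ) : ZMod c)) : ℂ) *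
        ZMod.stdAddChar (2 * a₁ * a₂ + a₁ * b₂ + a₂ * b₁) =
      ∑ x : (ZMod c)ˣ, if a₂ = - (x * a₁) then (c : ℂ) ^ 2 else 0 := by
    intro a₁ a₂
    simp only [← sum_b]
    rw [Finset.sum_comm]
    simp only [Finset.sum_comm (s := (Finset.univ : Finset (ZMod c)ˣ))]
    rw [Finset.sum_comm]
  simp only [h]
  have h2 : ∀ a₁ : ZMod c, ∑ a₂ : ZMod c, ∑ x : (ZMod c)ˣ,
      (if a₂ = - (x * a₁) then (c : ℂ) ^ 2 else 0) = (Nat.totient c : ℂ) * (c : ℂ) ^ 2 := by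
    intro a₁
    rw [Finset.sum_comm]
    simp [ZMod.card_units_eq_totient]
  simp only [h2, Finset.sum_const, Finset.card_univ, ZMod.card, nsmul_eq_mul]
  ring
end

section
/- Let f: ℝ → ℂ be a Schwartz function (smooth with all derivatives rapidly decaying), let c be a positive integer and a an integer. Then ∑_{n ∈ ℤ, n ≡ a (mod c)} f(n) = (1/c) ∑_{n ∈ ℤ} f̂(n/c) e^{2πi a n/c}, where f̂(ξ) = ∫_{-∞}^{∞} f(x) e^{-2πi x ξ} dx is the Fourier transform of f, and both series converge absolutely. -/
open MeasureTheory

theorem schwartz_summable_aux (h : SchwartzMap ℝ ℂ) (x : ℝ) :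
    Summable fun n : ℤ => ‖h (x + (n : ℝ))‖ := by
  have h1 := summable_of_isBigO (Real.summable_abs_int_rpow one_lt_two)
    (((h.compSubConstCLM ℂ (-x)).isBigO_cocompact_rpow (-2)).norm_left.comp_tendsto
      Int.tendsto_coe_cofinite)
  refine h1.congr fun n => ?_
  simp [add_comm]

/-- Poisson summation over an arithmetic progression: for a Schwartz function `f`,
a positive integer `c` and an integer `a`,
`∑_{n ≡ a (mod c)} f(n) = (1/c) ∑_{n ∈ ℤ} f̂(n/c) e^{2πi a n / c}`,
where `f̂(ξ) = ∫ f(x) e^{-2πi x ξ} dx`, and both series converge absolutely. -/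
theorem poisson_summation_arithmetic_progression
    (f : SchwartzMap ℝ ℂ) (c : ℕ) (hc : 0 < c) (a : ℤ) :
    (Summable fun n : ℤ => ‖f ((a : ℝ) + (c : ℝ) * (n : ℝ))‖) ∧
    (Summable fun n : ℤ =>
      ‖(∫ x : ℝ, f x * Complex.exp (-(2 * Real.pi * Complex.I * (x : ℂ) * (((n : ℝ) / (c : ℝ) : ℝ) : ℂ)))) *
          Complex.exp (2 * Real.pi * Complex.I * (a : ℂ) * (n : ℂ) / (c : ℂ))‖) ∧
    (∑' n : ℤ, f ((a : ℝ) + (c : ℝ) * (n : ℝ))) =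
      (1 / (c : ℂ)) *
        ∑' n : ℤ,
          (∫ x : ℝ, f x * Complex.exp (-(2 * Real.pi * Complex.I * (x : ℂ) * (((n : ℝ) / (c : ℝ) : ℝ) : ℂ)))) *
            Complex.exp (2 * Real.pi * Complex.I * (a : ℂ) * (n : ℂ) / (c : ℂ)) := by
  
  have hc0 : (c : ℝ) ≠ 0 := by positivity
  have hcC : (c : ℂ) ≠ 0 := by exact_mod_cast hc.ne'
  let e : ℝ ≃L[ℝ] ℝ := ContinuousLinearEquiv.unitsEquivAut ℝ (Units.mk0 (c : ℝ) hc0)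
  let g : SchwartzMap ℝ ℂ := SchwartzMap.compCLMOfContinuousLinearEquiv ℂ e f
  have hg : ∀ y, g y = f ((c : ℝ) * y) := fun y => by
    simp [g, e, mul_comm]
  have hF : ∀ n : ℤ, (∫ x : ℝ, f x * Complex.exp (-(2 * Real.pi * Complex.I * (x : ℂ) * (((n : ℝ) / (c : ℝ) : ℝ) : ℂ)))) = (c : ℂ) * FourierTransform.fourier g (n : ℝ) := by
    intro n
    rw [SchwartzMap.fourier_coe, Real.fourier_real_eq_integral_exp_smul]
    have := Measure.integral_comp_mul_left (fun x : ℝ => f x * Complex.exp (-(2 * Real.pi * Complex.I * (x : ℂ) * (((n : ℝ) / (c : ℝ) : ℝ) : ℂ)))) (c : ℝ)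
    rw [abs_of_nonneg (by positivity)] at this
    have h2 : (∫ v : ℝ, Complex.exp (((-2 * Real.pi * v * (n : ℝ) : ℝ) : ℂ) * Complex.I) • g v) = ((c : ℝ)⁻¹) • (∫ x : ℝ, f x * Complex.exp (-(2 * Real.pi * Complex.I * (x : ℂ) * (((n : ℝ) / (c : ℝ) : ℝ) : ℂ)))) := by
      rw [← this]
      congr 1 with v
      rw [hg, smul_eq_mul, mul_comm]
      congr 2
      push_cast
      field_simp
    rw [h2, Complex.real_smul, ← mul_assoc, Complex.ofReal_inv, Complex.ofReal_natCast,
      mul_inv_cancel₀ hcC, one_mul]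
  have hL : ∀ n : ℤ, f ((a : ℝ) + (c : ℝ) * (n : ℝ)) = g ((a : ℝ) / c + n) := fun n => by
    rw [hg]
    congr 1
    field_simp
  have hE : ∀ n : ℤ, Complex.exp (2 * Real.pi * Complex.I * (a : ℂ) * (n : ℂ) / (c : ℂ)) =
      fourier n ((((a : ℝ) / c : ℝ)) : UnitAddCircle) := fun n => by
    rw [fourier_coe_apply]
    congr 1
    push_cast
    field_simp
  simp only [hF, hL, hE]
  refine ⟨schwartz_summable_aux g _, ?_, ?_⟩
  · have := (schwartz_summable_aux (FourierTransform.fourier g) 0).mul_left (c : ℝ)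
    refine this.congr fun n => ?_
    simp [← hE, Complex.norm_exp]
  · rw [SchwartzMap.tsum_eq_tsum_fourier g, ← tsum_mul_left]
    congr 1 with n
    field_simp
end

section
/- Let m₁ and m₂ be distinct positive integers. Then the number of pairs (n₁, n₂) of positive integers satisfying n₁(n₁+m₁) = n₂(n₂+m₂) is at most d(|m₁² − m₂²|), the number of positive divisors of |m₁² − m₂²|. -/
/-- For distinct positive integers `m₁ ≠ m₂`, the number of pairs `(n₁, n₂)` of
positive integers with `n₁(n₁+m₁) = n₂(n₂+m₂)` is at most `d(|m₁² − m₂²|)`,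
the number of positive divisors of `|m₁² − m₂²|`. -/
theorem count_shifted_square_coincidences (m₁ m₂ : ℕ) (h₁ : 0 < m₁) (h₂ : 0 < m₂)
    (hne : m₁ ≠ m₂) :
    {p : ℕ × ℕ | 0 < p.1 ∧ 0 < p.2 ∧ p.1 * (p.1 + m₁) = p.2 * (p.2 + m₂)}.Finite ∧
    {p : ℕ × ℕ | 0 < p.1 ∧ 0 < p.2 ∧ p.1 * (p.1 + m₁) = p.2 * (p.2 + m₂)}.ncard ≤
      (((m₁ : ℤ) ^ 2 - (m₂ : ℤ) ^ 2).natAbs).divisors.card := by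
  set S := {p : ℕ × ℕ | 0 < p.1 ∧ 0 < p.2 ∧ p.1 * (p.1 + m₁) = p.2 * (p.2 + m₂)} with hS
  set D := (((m₁ : ℤ) ^ 2 - (m₂ : ℤ) ^ 2).natAbs).divisors with hD
  let f : ℕ × ℕ → ℕ := fun p => (2 * p.1 + m₁) + (2 * p.2 + m₂)
  have key : ∀ p ∈ S, (((2 * p.1 + m₁) + (2 * p.2 + m₂) : ℕ) : ℤ) *
      ((2 * p.1 + m₁) - (2 * p.2 + m₂)) = (m₁ : ℤ) ^ 2 - (m₂ : ℤ) ^ 2 := by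
    rintro ⟨a, b⟩ ⟨-, -, h⟩
    have h' : (a : ℤ) * (a + m₁) = b * (b + m₂) := by exact_mod_cast h
    push_cast
    linear_combination 4 * h'
  have hmaps : Set.MapsTo f S (D : Set ℕ) := by
    intro p hp
    have hk := key p hp
    rw [hD, Finset.mem_coe, Nat.mem_divisors]
    refine ⟨Int.natCast_dvd.mp ⟨_, hk.symm⟩, ?_⟩
    rw [Int.natAbs_ne_zero, sub_ne_zero]
    intro h
    apply hne
    have h3 : m₁ ^ 2 = m₂ ^ 2 := by exact_mod_cast h
    exact Nat.pow_left_injective (by norm_num : 2 ≠ 0) h3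
  have hinj : Set.InjOn f S := by
    rintro ⟨a, b⟩ hp ⟨c, d⟩ hq h
    have k1 := key _ hp
    have k2 := key _ hq
    simp only [f] at h
    simp only [] at k1 k2
    rw [h, ← k2] at k1
    have h0 : (((2 * c + m₁) + (2 * d + m₂) : ℕ) : ℤ) ≠ 0 := by
      exact_mod_cast (by omega)
    have := mul_left_cancel₀ h0 k1
    rw [Prod.mk.injEq]
    omega
  refine ⟨Set.Finite.of_injOn hmaps hinj D.finite_toSet, ?_⟩
  rw [← Set.ncard_coe_finset]
  exact Set.ncard_le_ncard_of_injOn f hmaps hinj D.finite_toSet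
end

section
/- Let h: (0,∞) → ℂ be smooth with compact support contained in (0,∞), let w ∈ ℂ, and for v > 0 define ħ^ℜ_w(v) = ∫₀^∞ h(√u)·(2πu)^{−1/2}·u^{w/2}·cos(uv) du. Then for all integers j ≥ 0 and A ≥ 0 there is a constant C depending only on h, Re(w), j and A such that |(d/dv)^j ħ^ℜ_w(v)| ≤ C·(1+|w|)^A·v^{−A} for all v > 0. -/
open MeasureTheory

/-- `ħ^ℜ_w(v) = ∫₀^∞ h(√u) (2πu)^{−1/2} u^{w/2} cos(uv) du`. -/
noncomputable def hbarRe (h : ℝ → ℂ) (w : ℂ) (v : ℝ) : ℂ :=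
  ∫ u in Set.Ioi (0 : ℝ),
    h (Real.sqrt u) * ((1 / Real.sqrt (2 * Real.pi * u) : ℝ) : ℂ) *
      (u : ℂ) ^ (w / 2) * ((Real.cos (u * v) : ℝ) : ℂ)

open scoped FourierTransform ContDiff

/-- Smooth functions with compact support in the positive reals. -/
structure PosTest (g : ℝ → ℂ) : Prop where
  smooth : ContDiff ℝ ∞ g
  cpt : HasCompactSupport g
  supp : tsupport g ⊆ Set.Ioi 0

/-- The power `u ^ s` for positive `u`. -/
noncomputable def posPow (s : ℂ) (u : ℝ) : ℂ := Complex.exp ((Real.log u : ℂ) * s)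

theorem posPow_eq (s : ℂ) {u : ℝ} (hu : 0 < u) : (u : ℂ) ^ s = posPow s u := by
  rw [posPow, Complex.cpow_def_of_ne_zero (by exact_mod_cast hu.ne'), Complex.ofReal_log hu.le]

theorem posPow_contDiffAt (s : ℂ) {u : ℝ} (hu : 0 < u) : ContDiffAt ℝ ∞ (posPow s) u := by
  unfold posPow
  have h1 : ContDiffAt ℝ ∞ (fun u : ℝ => (Real.log u : ℂ)) u :=
    Complex.ofRealCLM.contDiff.contDiffAt.comp u (Real.contDiffAt_log.2 hu.ne')
  exact (h1.mul contDiffAt_const).cexp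

theorem posPow_hasDerivAt (s : ℂ) {u : ℝ} (hu : 0 < u) :
    HasDerivAt (posPow s) (posPow s u * ((u : ℂ)⁻¹ * s)) u := by
  unfold posPow
  have h1 : HasDerivAt (fun u : ℝ => (Real.log u : ℂ)) ((u⁻¹ : ℝ) : ℂ) u :=
    (Real.hasDerivAt_log hu.ne').ofReal_comp
  have := (h1.mul_const s).cexp
  simpa using this

theorem norm_posPow (s : ℂ) (u : ℝ) : ‖posPow s u‖ = Real.exp (Real.log u * s.re) := by
  simp [posPow, Complex.norm_exp]

theorem PosTest.zero_of_nonpos {g : ℝ → ℂ} (hg : PosTest g) {u : ℝ} (hu : u ≤ 0) : g u = 0 := by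
  by_contra hne
  exact absurd (hg.supp (subset_tsupport g hne)) (not_lt.2 hu)

theorem PosTest.mul {g φ : ℝ → ℂ} (hg : PosTest g) (hφ : ∀ u, 0 < u → ContDiffAt ℝ ∞ φ u) :
    PosTest (fun u => g u * φ u) := by
  refine ⟨contDiff_iff_contDiffAt.2 fun u => ?_, hg.cpt.mul_right,
    tsupport_mul_subset_left.trans hg.supp⟩
  by_cases hu : u ∈ tsupport g
  · exact hg.smooth.contDiffAt.mul (hφ u (hg.supp hu))
  · have h0 : (fun u => g u * φ u) =ᶠ[nhds u] fun _ => 0 := by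
      filter_upwards [notMem_tsupport_iff_eventuallyEq.1 hu] with x hx
      simp [hx]
    exact contDiffAt_const.congr_of_eventuallyEq h0

theorem PosTest.deriv {g : ℝ → ℂ} (hg : PosTest g) : PosTest (deriv g) := by
  refine ⟨?_, hg.cpt.deriv, (closure_minimal support_deriv_subset (isClosed_tsupport g)).trans hg.supp⟩
  exact (contDiff_infty_iff_deriv.1 hg.smooth).2

theorem PosTest.integrable {g : ℝ → ℂ} (hg : PosTest g) : Integrable g :=
  hg.smooth.continuous.integrable_of_hasCompactSupport hg.cpt

theorem PosTest.mulPow {g : ℝ → ℂ} (hg : PosTest g) (s : ℂ) :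
    PosTest (fun u => g u * posPow s u) := hg.mul fun _ hu => posPow_contDiffAt s hu

theorem PosTest.mulInv {g : ℝ → ℂ} (hg : PosTest g) :
    PosTest (fun u => g u * (u : ℂ)⁻¹) := hg.mul fun u hu =>
  (Complex.ofRealCLM.contDiff.contDiffAt (x := u)).inv (by simpa using hu.ne')

theorem PosTest.deriv_mulPow {g : ℝ → ℂ} (hg : PosTest g) (s : ℂ) :
    _root_.deriv (fun u => g u * posPow s u) =
      (fun u => _root_.deriv g u * posPow s u) + s • (fun u => (g u * (u : ℂ)⁻¹) * posPow s u) := by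
  ext u
  have hd : HasDerivAt g (_root_.deriv g u) u :=
    (hg.smooth.differentiable (by simp) u).hasDerivAt
  rcases lt_or_ge 0 u with hu | hu
  · refine (hd.mul (posPow_hasDerivAt s hu)).deriv.trans ?_
    simp only [Pi.add_apply, Pi.smul_apply, smul_eq_mul]
    ring
  · have e1 := (hg.mulPow s).deriv.zero_of_nonpos hu
    have e2 := hg.deriv.zero_of_nonpos hu
    have e3 := hg.zero_of_nonpos hu
    rw [e1]; simp [e2, e3]

theorem PosTest.bound (r : ℝ) (A : ℕ) : ∀ {g : ℝ → ℂ}, PosTest g →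
    ∃ C : ℝ, 0 ≤ C ∧ ∀ s : ℂ, s.re = r → ∀ x : ℝ,
      (2 * Real.pi * |x|) ^ A * ‖𝓕 (fun u => g u * posPow s u) x‖ ≤ C * (1 + ‖s‖) ^ A := by
  induction A with
  | zero =>
    intro g hg
    refine ⟨∫ u, ‖g u * posPow r u‖, integral_nonneg fun _ => norm_nonneg _, fun s hs x => ?_⟩
    simp only [pow_zero, one_mul, mul_one]
    refine (VectorFourier.norm_fourierIntegral_le_integral_norm _ _ _ _ _).trans (le_of_eq ?_)
    simp [norm_posPow, hs]
  | succ A ih =>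
    intro g hg
    obtain ⟨C1, h1, H1⟩ := ih hg.deriv
    obtain ⟨C2, h2, H2⟩ := ih hg.mulInv
    refine ⟨C1 + C2, by positivity, fun s hs x => ?_⟩
    have key := congrFun (Real.fourier_deriv (hg.mulPow s).integrable
      ((hg.mulPow s).smooth.differentiable (by simp)) (hg.mulPow s).deriv.integrable) x
    rw [hg.deriv_mulPow s] at key
    have hadd : 𝓕 ((fun u => _root_.deriv g u * posPow s u) +
        s • (fun u => (g u * (u : ℂ)⁻¹) * posPow s u)) x =
        𝓕 (fun u => _root_.deriv g u * posPow s u) x +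
        s * 𝓕 (fun u => (g u * (u : ℂ)⁻¹) * posPow s u) x := by
      simp only [Real.fourier_real_eq_integral_exp_smul, Pi.add_apply, Pi.smul_apply, smul_eq_mul,
        mul_add]
      have hF : ∀ f : ℝ → ℂ, Integrable f → Integrable (fun v : ℝ =>
          Complex.exp (↑(-2 * Real.pi * v * x) * Complex.I) * f v) := by
        intro f hf
        refine hf.bdd_mul (c := 1) (by fun_prop) (Filter.Eventually.of_forall fun v => ?_)
        rw [Complex.norm_exp_ofReal_mul_I]
      rw [integral_add (hF _ (hg.deriv.mulPow s).integrable)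
        (hF _ ((hg.mulInv.mulPow s).integrable.const_mul s)), ← integral_const_mul]
      congr 2
      ext v; ring
    rw [hadd] at key
    have hn : (2 * Real.pi * |x|) * ‖𝓕 (fun u => g u * posPow s u) x‖ =
        ‖𝓕 (fun u => _root_.deriv g u * posPow s u) x +
        s * 𝓕 (fun u => (g u * (u : ℂ)⁻¹) * posPow s u) x‖ := by
      rw [key, norm_smul]
      simp [abs_of_pos Real.pi_pos]
    have b1 := H1 s hs x
    have b2 := H2 s hs x
    have hp : (0:ℝ) ≤ (2 * Real.pi * |x|) ^ A := by positivity
    calc (2 * Real.pi * |x|) ^ (A+1) * ‖𝓕 (fun u => g u * posPow s u) x‖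
        = (2 * Real.pi * |x|) ^ A * ‖𝓕 (fun u => _root_.deriv g u * posPow s u) x +
        s * 𝓕 (fun u => (g u * (u : ℂ)⁻¹) * posPow s u) x‖ := by rw [← hn]; ring
      _ ≤ (2 * Real.pi * |x|) ^ A * (‖𝓕 (fun u => _root_.deriv g u * posPow s u) x‖ +
        ‖s‖ * ‖𝓕 (fun u => (g u * (u : ℂ)⁻¹) * posPow s u) x‖) := by
          gcongr
          exact (norm_add_le _ _).trans (by rw [norm_mul])
      _ = (2 * Real.pi * |x|) ^ A * ‖𝓕 (fun u => _root_.deriv g u * posPow s u) x‖ +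
        ‖s‖ * ((2 * Real.pi * |x|) ^ A * ‖𝓕 (fun u => (g u * (u : ℂ)⁻¹) * posPow s u) x‖) := by ring
      _ ≤ C1 * (1 + ‖s‖) ^ A + ‖s‖ * (C2 * (1 + ‖s‖) ^ A) := by gcongr
      _ ≤ (C1 + C2) * (1 + ‖s‖) ^ (A+1) := by
          have : 0 ≤ C1 * (1 + ‖s‖) ^ A * ‖s‖ := by positivity
          have : 0 ≤ C2 * (1 + ‖s‖) ^ A := by positivity
          rw [pow_succ]; nlinarith

/-- The amplitude. -/
noncomputable def amp (h : ℝ → ℂ) (u : ℝ) : ℂ :=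
  h (Real.sqrt u) * ((1 / Real.sqrt (2 * Real.pi * u) : ℝ) : ℂ)

theorem amp_posTest (h : ℝ → ℂ) (hsm : ContDiff ℝ (⊤ : ℕ∞) h) (hcs : HasCompactSupport h)
    (hsupp : tsupport h ⊆ Set.Ioi 0) : PosTest (amp h) := by
  have hK : IsCompact ((fun x : ℝ => x ^ 2) '' tsupport h) :=
    hcs.isCompact.image (by fun_prop)
  have hsub : Function.support (fun u => h (Real.sqrt u)) ⊆ (fun x : ℝ => x ^ 2) '' tsupport h := by
    intro u hu
    have h1 : Real.sqrt u ∈ tsupport h := subset_tsupport h hu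
    have h2 : 0 < Real.sqrt u := hsupp h1
    exact ⟨_, h1, Real.sq_sqrt (Real.sqrt_pos.1 h2).le⟩
  have hts : tsupport (fun u => h (Real.sqrt u)) ⊆ (fun x : ℝ => x ^ 2) '' tsupport h :=
    closure_minimal hsub hK.isClosed
  have hbase : PosTest (fun u => h (Real.sqrt u)) := by
    refine ⟨contDiff_iff_contDiffAt.2 fun u => ?_, hK.of_isClosed_subset (isClosed_tsupport _) hts,
      fun u hu => ?_⟩
    · rcases lt_or_ge 0 u with hu | hu
      · exact (hsm.contDiffAt (x := Real.sqrt u)).comp u (Real.contDiffAt_sqrt hu.ne')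
      · have h0 : (0:ℝ) ∉ tsupport h := fun h0 => lt_irrefl (0:ℝ) (Set.mem_Ioi.1 (hsupp h0))
        have he := notMem_tsupport_iff_eventuallyEq.1 h0
        have ht : Filter.Tendsto Real.sqrt (nhds u) (nhds 0) := by
          have := Real.continuous_sqrt.tendsto u
          rwa [Real.sqrt_eq_zero_of_nonpos hu] at this
        have : (fun u => h (Real.sqrt u)) =ᶠ[nhds u] fun _ => 0 := ht.eventually he
        exact contDiffAt_const.congr_of_eventuallyEq this
    · obtain ⟨y, hy, rfl⟩ := hts hu
      have : 0 < y := hsupp hy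
      exact pow_pos this 2
  refine hbase.mul fun u hu => ?_
  have hpos : 0 < 2 * Real.pi * u := by positivity
  refine (Complex.ofRealCLM.contDiff.contDiffAt (n := ∞)).comp u ?_
  refine contDiffAt_const.div ?_ (Real.sqrt_pos.2 hpos).ne'
  exact (Real.contDiffAt_sqrt hpos.ne').comp u (contDiffAt_const.mul contDiffAt_id)

theorem hbarRe_eq (h : ℝ → ℂ) (hg : PosTest (amp h)) (w : ℂ) :
    hbarRe h w = fun v => (1/2 : ℂ) * 𝓕 (fun u => amp h u * posPow (w/2) u) ((2 * Real.pi)⁻¹ * v) +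
      (1/2 : ℂ) * 𝓕 (fun u => amp h u * posPow (w/2) u) ((-(2 * Real.pi)⁻¹) * v) := by
  ext v
  have h1 : hbarRe h w v = ∫ u : ℝ, amp h u * posPow (w/2) u * Complex.cos (u * v) := by
    unfold hbarRe
    rw [← setIntegral_eq_integral_of_forall_compl_eq_zero (s := Set.Ioi (0:ℝ))
      (f := fun u : ℝ => amp h u * posPow (w/2) u * Complex.cos (u * v))]
    · refine setIntegral_congr_fun measurableSet_Ioi fun u hu => ?_
      simp only [amp]
      rw [posPow_eq _ hu]
      push_cast
      rfl
    · intro u hu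
      rw [hg.zero_of_nonpos (not_lt.1 hu)]; simp
  rw [h1]
  simp only [Real.fourier_real_eq_integral_exp_smul, smul_eq_mul]
  have hF : ∀ x : ℝ, Integrable (fun v : ℝ =>
      Complex.exp (↑(-2 * Real.pi * v * x) * Complex.I) * (amp h v * posPow (w/2) v)) := by
    intro x
    refine (hg.mulPow (w/2)).integrable.bdd_mul (c := 1) (by fun_prop)
      (Filter.Eventually.of_forall fun v => ?_)
    rw [Complex.norm_exp_ofReal_mul_I]
  rw [← integral_const_mul, ← integral_const_mul,
    ← integral_add ((hF _).const_mul _) ((hF _).const_mul _)]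
  congr 1
  ext u
  have hpi : Real.pi ≠ 0 := Real.pi_ne_zero
  have e1 : -2 * Real.pi * u * ((2 * Real.pi)⁻¹ * v) = -(u * v) := by field_simp
  have e2 : -2 * Real.pi * u * (-(2 * Real.pi)⁻¹ * v) = u * v := by field_simp
  rw [e1, e2, Complex.cos]
  push_cast
  ring

/-- For smooth `h` with compact support in `(0,∞)` and any `w ∈ ℂ`, all derivatives
of `ħ^ℜ_w` decay rapidly: for all `j, A ≥ 0` there is a constant `C` depending only
on `h`, `Re(w)`, `j` and `A` such that
`|(d/dv)^j ħ^ℜ_w(v)| ≤ C (1+|w|)^A v^{−A}` for all `v > 0`. -/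
theorem hbarRe_iteratedDeriv_rapid_decay
    (h : ℝ → ℂ) (hsm : ContDiff ℝ (⊤ : ℕ∞) h) (hcs : HasCompactSupport h)
    (hsupp : tsupport h ⊆ Set.Ioi 0) :
    ∀ (r : ℝ) (j A : ℕ), ∃ C : ℝ, ∀ w : ℂ, w.re = r → ∀ v : ℝ, 0 < v →
      ‖iteratedDeriv j (hbarRe h w) v‖ ≤ C * (1 + ‖w‖) ^ (A : ℝ) * v ^ (-(A : ℝ)) := by
  intro r j A
  have hg := amp_posTest h hsm hcs hsupp
  have hgj : PosTest (fun u => amp h u * (-2 * Real.pi * Complex.I * u) ^ j) := by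
    refine hg.mul fun u _ => ?_
    exact ((contDiff_const.mul Complex.ofRealCLM.contDiff).pow j).contDiffAt
  obtain ⟨C, hC, H⟩ := hgj.bound (r/2) A
  refine ⟨((2 * Real.pi)⁻¹) ^ j * C, fun w hw v hv => ?_⟩
  set F : ℝ → ℂ := fun u => amp h u * posPow (w/2) u with hF
  have hFt : PosTest F := hg.mulPow (w/2)
  have hint : ∀ n : ℕ, Integrable (fun x : ℝ => x ^ n • F x) := by
    intro n
    have : PosTest (fun u => F u * (u:ℂ) ^ n) :=
      hFt.mul fun u _ => (Complex.ofRealCLM.contDiff.pow n).contDiffAt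
    refine this.integrable.congr (Filter.Eventually.of_forall fun x => ?_)
    simp [mul_comm]
  have hsmooth : ContDiff ℝ ∞ (𝓕 F) := by
    refine Real.contDiff_fourier fun n _ => ?_
    refine (hint n).norm.congr (Filter.Eventually.of_forall fun x => ?_)
    simp
  have hsj : ContDiff ℝ j (𝓕 F) := hsmooth.of_le (by exact_mod_cast le_top)
  have hit : iteratedDeriv j (𝓕 F) =
      𝓕 (fun u => (amp h u * (-2 * Real.pi * Complex.I * u) ^ j) * posPow (w/2) u) := by
    rw [Real.iteratedDeriv_fourier (N := ⊤) (fun n _ => hint n) le_top]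
    congr 1
    ext u
    simp only [hF, smul_eq_mul]
    ring
  have hb : ∀ x : ℝ, 2 * Real.pi * |x| = v →
      ‖iteratedDeriv j (𝓕 F) x‖ ≤ C * (1 + ‖w‖) ^ A * (v ^ A)⁻¹ := by
    intro x hx
    have hh := H (w/2) (by simp [hw]) x
    rw [hx, ← hit] at hh
    rw [← div_eq_mul_inv, le_div_iff₀ (by positivity), mul_comm]
    refine hh.trans ?_
    gcongr
    simp
  have hs1 : ∀ c : ℝ, ContDiff ℝ j (fun v : ℝ => 𝓕 F (c * v)) := fun c =>
    hsj.comp (contDiff_const.mul contDiff_id)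
  have hbd : iteratedDeriv j (hbarRe h w) v =
      (1/2 : ℂ) * (((2 * Real.pi)⁻¹) ^ j • iteratedDeriv j (𝓕 F) ((2 * Real.pi)⁻¹ * v)) +
      (1/2 : ℂ) * ((-(2 * Real.pi)⁻¹) ^ j • iteratedDeriv j (𝓕 F) (-(2 * Real.pi)⁻¹ * v)) := by
    rw [hbarRe_eq h hg w, ← hF]
    rw [iteratedDeriv_fun_add (contDiff_const.mul (hs1 _)).contDiffAt
      (contDiff_const.mul (hs1 _)).contDiffAt]
    rw [iteratedDeriv_const_mul_field, iteratedDeriv_const_mul_field]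
    rw [iteratedDeriv_comp_const_smul hsj, iteratedDeriv_comp_const_smul hsj]
  have hpi := Real.pi_pos
  have b1 := hb ((2 * Real.pi)⁻¹ * v) (by rw [abs_of_pos (by positivity)]; field_simp)
  have b2 := hb (-(2 * Real.pi)⁻¹ * v) (by
    rw [neg_mul, abs_neg, abs_of_pos (by positivity)]; field_simp)
  have hab : |(2 * Real.pi)⁻¹| = (2 * Real.pi)⁻¹ := abs_of_pos (by positivity)
  rw [hbd, Real.rpow_neg hv.le, Real.rpow_natCast, Real.rpow_natCast]
  refine (norm_add_le _ _).trans ?_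
  rw [norm_mul, norm_mul, norm_smul, norm_smul, norm_pow, norm_pow, norm_neg, Real.norm_eq_abs, hab]
  have hc : (0:ℝ) ≤ ((2 * Real.pi)⁻¹) ^ j := by positivity
  have c1 := mul_le_mul_of_nonneg_left b1 hc
  have c2 := mul_le_mul_of_nonneg_left b2 hc
  have hhalf : ‖(1/2 : ℂ)‖ = 1/2 := by norm_num
  rw [hhalf]
  linarith
end

section
/- Let h: (0,∞) → ℂ be smooth with compact support contained in (0,∞), let w ∈ ℂ, and for v > 0 define ħ^ℜ_w(v) = ∫₀^∞ h(√u)·(2πu)^{−1/2}·u^{w/2}·cos(uv) du, with Mellin transform ℏ̃^ℜ_w(s) = ∫₀^∞ ħ^ℜ_w(v)·v^{s−1} dv. Then for every s with 0 < Re(s) < 1 one has the explicit evaluation ℏ̃^ℜ_w(s) = Γ(s)·cos(πs/2)·∫₀^∞ h(√u)·(2πu)^{−1/2}·u^{w/2−s} du. -/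
open MeasureTheory

open MeasureTheory Filter Topology Set

lemma aux_int_real {σ c : ℝ} (hσ : 0 < σ) (hc : 0 < c) :
    IntegrableOn (fun t : ℝ => t ^ (σ - 1) * Real.exp (-c * t)) (Ioi 0) := by
  have := integrableOn_rpow_mul_exp_neg_mul_rpow (p := 1) (s := σ - 1) (b := c)
    (by linarith) one_pos hc
  simpa using this

lemma aux_meas (s r : ℂ) : AEStronglyMeasurable
    (fun t : ℝ => (t : ℂ) ^ (s - 1) * Complex.exp (-(r * t))) (volume.restrict (Ioi 0)) := by
  apply Measurable.aestronglyMeasurable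
  fun_prop

lemma aux_norm (s r : ℂ) {t : ℝ} (ht : 0 < t) :
    ‖(t : ℂ) ^ (s - 1) * Complex.exp (-(r * t))‖ = t ^ (s.re - 1) * Real.exp (-r.re * t) := by
  rw [norm_mul, Complex.norm_cpow_eq_rpow_re_of_pos ht, Complex.norm_exp]
  simp

lemma aux_int (s r : ℂ) (hs : 0 < s.re) (hr : 0 < r.re) :
    IntegrableOn (fun t : ℝ => (t : ℂ) ^ (s - 1) * Complex.exp (-(r * t))) (Ioi 0) := by
  refine Integrable.mono' (aux_int_real hs hr) (aux_meas s r) ?_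
  filter_upwards [ae_restrict_mem measurableSet_Ioi] with t ht
  rw [aux_norm s r ht]

lemma aux_diff (s : ℂ) (hs : 0 < s.re) (r : ℂ) (hr : 0 < r.re) :
    DifferentiableAt ℂ (fun r : ℂ => ∫ t in Ioi (0:ℝ), (t : ℂ) ^ (s - 1) * Complex.exp (-(r * t)))
      r := by
  have hopen : {z : ℂ | r.re / 2 < z.re} ∈ 𝓝 r :=
    (isOpen_lt continuous_const Complex.continuous_re).mem_nhds (by simp; linarith)
  have h := hasDerivAt_integral_of_dominated_loc_of_deriv_le (𝕜 := ℂ)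
    (μ := volume.restrict (Ioi (0:ℝ)))
    (F := fun (r : ℂ) (t : ℝ) => (t : ℂ) ^ (s - 1) * Complex.exp (-(r * t)))
    (F' := fun (r : ℂ) (t : ℝ) => (t : ℂ) ^ (s - 1) * (Complex.exp (-(r * t)) * (-t)))
    (bound := fun t => t ^ (s.re + 1 - 1) * Real.exp (-(r.re / 2) * t))
    hopen (Eventually.of_forall fun r => aux_meas s r) (aux_int s r hs hr) ?_ ?_
    (aux_int_real (by linarith) (by linarith)) ?_
  · exact h.2.differentiableAt
  · apply Measurable.aestronglyMeasurable
    fun_prop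
  · filter_upwards [ae_restrict_mem measurableSet_Ioi] with t ht x hx
    have ht : 0 < t := ht
    have hx : r.re / 2 < x.re := hx
    rw [← mul_assoc, norm_mul, aux_norm s x ht, norm_neg, Complex.norm_real, Real.norm_of_nonneg ht.le]
    have : t ^ (s.re + 1 - 1) = t ^ (s.re - 1) * t := by
      rw [show s.re + 1 - 1 = s.re - 1 + 1 by ring, Real.rpow_add ht, Real.rpow_one]
    rw [this, mul_right_comm]
    gcongr
  · refine Eventually.of_forall fun t x _ => ?_
    have h1 : HasDerivAt (fun x : ℂ => -(x * t)) (-(t:ℂ)) x := by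
      have h0 := ((hasDerivAt_id' x).mul_const (t:ℂ)).fun_neg
      rwa [one_mul] at h0
    exact (h1.cexp).const_mul _

lemma aux_laplace (s r : ℂ) (hs : 0 < s.re) (hr : 0 < r.re) :
    ∫ t in Ioi (0:ℝ), (t : ℂ) ^ (s - 1) * Complex.exp (-(r * t)) = r ^ (-s) * Complex.Gamma s := by
  have hU : IsOpen {z : ℂ | 0 < z.re} := isOpen_lt continuous_const Complex.continuous_re
  have hf : AnalyticOnNhd ℂ (fun r : ℂ => ∫ t in Ioi (0:ℝ), (t : ℂ) ^ (s - 1) * Complex.exp (-(r * t)))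
      {z : ℂ | 0 < z.re} :=
    DifferentiableOn.analyticOnNhd
      (fun z hz => (aux_diff s hs z hz).differentiableWithinAt) hU
  have hg : AnalyticOnNhd ℂ (fun r : ℂ => r ^ (-s) * Complex.Gamma s) {z : ℂ | 0 < z.re} := by
    refine DifferentiableOn.analyticOnNhd (fun z hz => ?_) hU
    have : z ∈ Complex.slitPlane := Or.inl hz
    exact ((differentiableAt_id.cpow (differentiableAt_const _) this).mul_const _).differentiableWithinAt
  have hconn : IsPreconnected {z : ℂ | 0 < z.re} := (convex_halfSpace_re_gt 0).isPreconnected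
  refine hf.eqOn_of_preconnected_of_frequently_eq hg hconn (z₀ := 1) (by simp) ?_ hr
  have hreal : ∀ x : ℝ, 0 < x → ∫ t in Ioi (0:ℝ), (t : ℂ) ^ (s - 1) * Complex.exp (-((x:ℂ) * t))
      = (x:ℂ) ^ (-s) * Complex.Gamma s := by
    intro x hx
    rw [Complex.integral_cpow_mul_exp_neg_mul_Ioi hs hx, one_div, Complex.inv_cpow, Complex.cpow_neg]
    rw [Complex.arg_ofReal_of_nonneg hx.le]; exact Real.pi_pos.ne
  have ht : Tendsto (fun x : ℝ => (x:ℂ)) (𝓝[>] 1) (𝓝[≠] 1) := by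
    refine tendsto_nhdsWithin_iff.2 ⟨?_, ?_⟩
    · exact (Complex.continuous_ofReal.tendsto' 1 1 (by simp)).mono_left nhdsWithin_le_nhds
    · filter_upwards [self_mem_nhdsWithin] with x hx
      simp only [mem_compl_iff, mem_singleton_iff, Complex.ofReal_eq_one]
      exact (ne_of_gt hx)
  refine ht.frequently (Eventually.frequently ?_)
  filter_upwards [self_mem_nhdsWithin] with x hx
  exact hreal x (zero_lt_one.trans hx)

lemma aux_inner (s : ℂ) (hs : 0 < s.re) (ε u : ℝ) (hε : 0 < ε) :
    ∫ v in Ioi (0:ℝ), ((Real.cos (u * v) : ℝ) : ℂ) * ((v : ℂ) ^ (s - 1) * Complex.exp (-(ε * v))) =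
      Complex.Gamma s / 2 * ((ε + u * Complex.I) ^ (-s) + (ε - u * Complex.I) ^ (-s)) := by
  have h1 : 0 < ((ε:ℂ) + u * Complex.I).re := by simpa
  have h2 : 0 < ((ε:ℂ) - u * Complex.I).re := by simpa
  have e : ∀ v : ℝ, ((Real.cos (u * v) : ℝ) : ℂ) * ((v : ℂ) ^ (s - 1) * Complex.exp (-(ε * v))) =
      ((v : ℂ) ^ (s - 1) * Complex.exp (-((ε + u * Complex.I) * v)) +
        (v : ℂ) ^ (s - 1) * Complex.exp (-((ε - u * Complex.I) * v))) / 2 := by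
    intro v
    rw [Complex.ofReal_cos, Complex.cos,
      show -(((ε:ℂ) + u * Complex.I) * v) = -(ε * v) + -(u * v) * Complex.I by ring,
      show -(((ε:ℂ) - u * Complex.I) * v) = -(ε * v) + (u * v) * Complex.I by ring,
      Complex.exp_add, Complex.exp_add]
    push_cast
    ring
  simp_rw [e]
  rw [integral_div, integral_add (aux_int s _ hs h1) (aux_int s _ hs h2),
    aux_laplace s _ hs h1, aux_laplace s _ hs h2]
  ring

lemma aux_lim_val (s : ℂ) (u : ℝ) (hu : 0 < u) :
    Complex.Gamma s / 2 * ((u * Complex.I) ^ (-s) + (-(u * Complex.I)) ^ (-s)) =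
      Complex.Gamma s * Complex.cos ((Real.pi : ℂ) * s / 2) * (u:ℂ) ^ (-s) := by
  have hu' : (u:ℂ) ≠ 0 := by exact_mod_cast hu.ne'
  rw [← mul_neg, Complex.cpow_def_of_ne_zero (by simp [hu']), Complex.cpow_def_of_ne_zero (by simp [hu']),
    Complex.cpow_def_of_ne_zero hu', Complex.log_ofReal_mul hu (by simp),
    Complex.log_ofReal_mul hu (by simp), Complex.log_I, Complex.log_neg_I, Complex.ofReal_log hu.le,
    add_mul, add_mul, Complex.exp_add, Complex.exp_add, Complex.cos]
  rw [show (Real.pi / 2 * Complex.I * -s : ℂ) = -(Real.pi * s / 2) * Complex.I by ring,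
    show (-(Real.pi / 2) * Complex.I * -s : ℂ) = (Real.pi * s / 2) * Complex.I by ring]
  ring

lemma aux_bound (s z : ℂ) (hs : 0 < s.re) (a : ℝ) (ha : 0 < a) (hz : a ≤ |z.im|) :
    ‖z ^ (-s)‖ ≤ a ^ (-s.re) * Real.exp (Real.pi * |s.im|) := by
  have h := Complex.norm_cpow_le z (-s)
  refine h.trans ?_
  rw [div_eq_mul_inv, ← Real.exp_neg]
  have h1 : a ≤ ‖z‖ := hz.trans (Complex.abs_im_le_norm z)
  have h2 : ‖z‖ ^ (-s).re ≤ a ^ (-s.re) :=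
    Real.rpow_le_rpow_of_nonpos ha h1 (by simpa using hs.le)
  have h3 : -(z.arg * (-s).im) ≤ Real.pi * |s.im| := by
    calc -(z.arg * (-s).im) = z.arg * s.im := by simp
      _ ≤ |z.arg * s.im| := le_abs_self _
      _ = |z.arg| * |s.im| := abs_mul _ _
      _ ≤ _ := by gcongr; exact Complex.abs_arg_le_pi z
  gcongr

lemma aux_cont (g : ℝ → ℂ) (hg : Continuous g) (hcs : HasCompactSupport g) :
    Continuous (fun v : ℝ => ∫ u in Ioi (0:ℝ), g u * ((Real.cos (u * v) : ℝ) : ℂ)) := by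
  refine continuous_of_dominated (bound := fun u => ‖g u‖) ?_ ?_ ?_ ?_
  · intro v
    exact Continuous.aestronglyMeasurable (by fun_prop)
  · intro v
    refine Eventually.of_forall fun u => ?_
    rw [norm_mul, Complex.norm_real]
    exact mul_le_of_le_one_right (norm_nonneg _) (Real.abs_cos_le_one _)
  · exact (hg.integrable_of_hasCompactSupport hcs).norm.integrableOn
  · exact Eventually.of_forall fun u => by fun_prop

lemma aux_decay (g : ℝ → ℂ) (hg : ContDiff ℝ 1 g) (hcs : HasCompactSupport g)
    (hz : ∀ u ≤ 0, g u = 0) : ∃ C : ℝ, ∀ v : ℝ, 0 < v →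
    ‖∫ u in Ioi (0:ℝ), g u * ((Real.cos (u * v) : ℝ) : ℂ)‖ ≤ C * v⁻¹ := by
  have hd : Continuous (deriv g) := hg.continuous_deriv le_rfl
  have hdc : HasCompactSupport (deriv g) := hcs.deriv
  refine ⟨∫ u, ‖deriv g u‖, fun v hv => ?_⟩
  have hv' : (v:ℂ) ≠ 0 := by exact_mod_cast hv.ne'
  rw [setIntegral_eq_integral_of_forall_compl_eq_zero
    (fun u hu => by rw [hz u (by simpa using hu), zero_mul])]
  have hcosc : Continuous fun u : ℝ => ((Real.cos (u * v) : ℝ) : ℂ) := by fun_prop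
  have hsinc : Continuous fun u : ℝ => ((Real.sin (u * v) : ℝ) : ℂ) / v := by fun_prop
  have key := integral_mul_deriv_eq_deriv_mul_of_integrable (u := g) (u' := deriv g)
    (v := fun u : ℝ => ((Real.sin (u * v) : ℝ) : ℂ) / v)
    (v' := fun u : ℝ => ((Real.cos (u * v) : ℝ) : ℂ))
    (fun x _ => (hg.differentiable one_ne_zero x).hasDerivAt)
    (fun x _ => by
      have h1 : HasDerivAt (fun u : ℝ => Real.sin (u * v)) (Real.cos (x * v) * v) x := by
        have h0 := ((hasDerivAt_id' x).mul_const v).sin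
        rwa [one_mul] at h0
      have h2 := h1.ofReal_comp.div_const (v:ℂ)
      convert h2 using 1
      push_cast
      field_simp)
    ((hg.continuous.mul hcosc).integrable_of_hasCompactSupport hcs.mul_right)
    ((hd.mul hsinc).integrable_of_hasCompactSupport hdc.mul_right)
    ((hg.continuous.mul hsinc).integrable_of_hasCompactSupport hcs.mul_right)
  rw [key, norm_neg, ← integral_mul_const]
  refine norm_integral_le_of_norm_le
    ((hd.integrable_of_hasCompactSupport hdc).norm.mul_const _) (Eventually.of_forall fun u => ?_)
  rw [norm_mul, norm_div, Complex.norm_real, Complex.norm_real, Real.norm_of_nonneg hv.le,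
    div_eq_mul_inv]
  gcongr
  exact mul_le_of_le_one_left (by positivity) (Real.abs_sin_le_one _)

lemma aux_main (g : ℝ → ℂ) (hg : ContDiff ℝ 1 g) (hcs : HasCompactSupport g)
    (a : ℝ) (ha : 0 < a) (hz : ∀ u < a, g u = 0) (s : ℂ) (hs0 : 0 < s.re) (hs1 : s.re < 1) :
    ∫ v in Ioi (0:ℝ), (∫ u in Ioi (0:ℝ), g u * ((Real.cos (u * v) : ℝ) : ℂ)) * (v:ℂ) ^ (s - 1) =
      Complex.Gamma s * Complex.cos ((Real.pi : ℂ) * s / 2) *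
        ∫ u in Ioi (0:ℝ), g u * (u:ℂ) ^ (-s) := by
  set G : ℝ → ℂ := fun v => ∫ u in Ioi (0:ℝ), g u * ((Real.cos (u * v) : ℝ) : ℂ) with hG
  have hGc : Continuous G := aux_cont g hg.continuous hcs
  obtain ⟨C, hC⟩ := aux_decay g hg hcs (fun u hu => hz u (hu.trans_lt ha))
  have hgi : IntegrableOn g (Ioi 0) :=
    (hg.continuous.integrable_of_hasCompactSupport hcs).integrableOn
  have hGint : IntegrableOn (fun v : ℝ => G v * (v:ℂ) ^ (s - 1)) (Ioi 0) := by
    have : MellinConvergent G s := by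
      refine mellinConvergent_of_isBigO_rpow (a := 1) (b := 0)
        (hGc.locallyIntegrable.locallyIntegrableOn _) ?_ hs1 ?_ hs0
      · refine Asymptotics.IsBigO.of_bound C ?_
        filter_upwards [eventually_gt_atTop 0] with v hv
        rw [Real.rpow_neg_one, Real.norm_of_nonneg (by positivity)]
        exact hC v hv
      · simp only [neg_zero, Real.rpow_zero]
        exact ((hGc.tendsto 0).mono_left nhdsWithin_le_nhds).isBigO_one ℝ
    refine this.congr_fun (fun v _ => ?_) measurableSet_Ioi
    simp [mul_comm]
  have L1 : Tendsto (fun ε : ℝ => ∫ v in Ioi (0:ℝ), G v * (v:ℂ) ^ (s - 1) * Complex.exp (-(ε * v)))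
      (𝓝[>] 0) (𝓝 (∫ v in Ioi (0:ℝ), G v * (v:ℂ) ^ (s - 1))) := by
    refine tendsto_integral_filter_of_dominated_convergence
      (fun v => ‖G v * (v:ℂ) ^ (s - 1)‖) ?_ ?_ hGint.norm ?_
    · refine Eventually.of_forall fun ε => hGint.aestronglyMeasurable.mul ?_
      exact Continuous.aestronglyMeasurable (by fun_prop)
    · filter_upwards [self_mem_nhdsWithin] with ε hε
      have hε : 0 < ε := hε
      filter_upwards [ae_restrict_mem measurableSet_Ioi] with v hv
      have hv : 0 < v := hv
      rw [norm_mul]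
      refine mul_le_of_le_one_right (norm_nonneg _) ?_
      rw [Complex.norm_exp]
      simp
      positivity
    · refine Eventually.of_forall fun v => ?_
      have : Continuous fun ε : ℝ => G v * (v:ℂ) ^ (s - 1) * Complex.exp (-(ε * v)) := by fun_prop
      exact (this.tendsto' 0 _ (by simp)).mono_left nhdsWithin_le_nhds
  have L2 : Tendsto (fun ε : ℝ => ∫ u in Ioi (0:ℝ), g u * (Complex.Gamma s / 2 *
        ((ε + u * Complex.I) ^ (-s) + (ε - u * Complex.I) ^ (-s))))
      (𝓝[>] 0) (𝓝 (∫ u in Ioi (0:ℝ), g u * (Complex.Gamma s *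
        Complex.cos ((Real.pi : ℂ) * s / 2) * (u:ℂ) ^ (-s)))) := by
    set B := a ^ (-s.re) * Real.exp (Real.pi * |s.im|) with hB
    refine tendsto_integral_filter_of_dominated_convergence
      (fun u => ‖g u‖ * (‖Complex.Gamma s / 2‖ * (B + B))) ?_ ?_ (hgi.norm.mul_const _) ?_
    · refine Eventually.of_forall fun ε => hgi.aestronglyMeasurable.mul ?_
      apply Measurable.aestronglyMeasurable
      fun_prop
    · filter_upwards [self_mem_nhdsWithin] with ε hε
      refine Eventually.of_forall fun u => ?_
      rcases lt_or_ge u a with hu | hu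
      · simp [hz u hu]
      · rw [norm_mul, norm_mul]
        have hu0 : 0 < u := ha.trans_le hu
        have b1 : ‖((ε:ℂ) + u * Complex.I) ^ (-s)‖ ≤ B :=
          aux_bound s _ hs0 a ha (by simpa [abs_of_pos hu0] using hu)
        have b2 : ‖((ε:ℂ) - u * Complex.I) ^ (-s)‖ ≤ B :=
          aux_bound s _ hs0 a ha (by simpa [abs_of_pos hu0] using hu)
        gcongr
        exact (norm_add_le _ _).trans (add_le_add b1 b2)
    · filter_upwards [ae_restrict_mem measurableSet_Ioi] with u hu
      have hu : 0 < u := hu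
      rw [← aux_lim_val s u hu]
      refine Tendsto.mono_left ?_ nhdsWithin_le_nhds
      refine (Tendsto.add ?_ ?_).const_mul _ |>.const_mul _
      · have hc : Tendsto (fun ε : ℝ => (ε:ℂ) + u * Complex.I) (𝓝 0) (𝓝 (u * Complex.I)) :=
          Continuous.tendsto' (by fun_prop) _ _ (by simp)
        exact hc.cpow tendsto_const_nhds (Or.inr (by simpa using hu.ne'))
      · have hc : Tendsto (fun ε : ℝ => (ε:ℂ) - u * Complex.I) (𝓝 0) (𝓝 (-(u * Complex.I))) :=
          Continuous.tendsto' (by fun_prop) _ _ (by simp)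
        exact hc.cpow tendsto_const_nhds (Or.inr (by simpa using hu.ne'))
  have E : ∀ ε : ℝ, 0 < ε → ∫ v in Ioi (0:ℝ), G v * (v:ℂ) ^ (s - 1) * Complex.exp (-(ε * v)) =
      ∫ u in Ioi (0:ℝ), g u * (Complex.Gamma s / 2 *
        ((ε + u * Complex.I) ^ (-s) + (ε - u * Complex.I) ^ (-s))) := by
    intro ε hε
    have hk := aux_int s (ε:ℂ) hs0 (by simpa using hε)
    have hprod := Integrable.mul_prod hk hgi
    have hF : Integrable (Function.uncurry fun (v u : ℝ) =>
        (v:ℂ) ^ (s - 1) * Complex.exp (-(ε * v)) * g u * ((Real.cos (u * v) : ℝ) : ℂ))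
        ((volume.restrict (Ioi 0)).prod (volume.restrict (Ioi 0))) := by
      refine Integrable.mul_bdd (c := 1) hprod ?_ ?_
      · exact Continuous.aestronglyMeasurable (by fun_prop)
      · refine Eventually.of_forall fun p => ?_
        rw [Complex.norm_real]
        exact Real.abs_cos_le_one _
    have sw := integral_integral_swap hF
    calc _ = ∫ v in Ioi (0:ℝ), ∫ u in Ioi (0:ℝ),
        (v:ℂ) ^ (s - 1) * Complex.exp (-(ε * v)) * g u * ((Real.cos (u * v) : ℝ) : ℂ) := by
          congr 1 with v
          simp_rw [mul_assoc ((v:ℂ) ^ (s - 1) * Complex.exp (-(ε * v)))]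
          rw [integral_const_mul, hG]
          ring
      _ = _ := sw
      _ = _ := by
          congr 1 with u
          rw [← aux_inner s hs0 ε u hε, ← integral_const_mul]
          congr 1 with v
          ring
  have L3 := L2.congr' (f₂ := fun ε : ℝ => ∫ v in Ioi (0:ℝ), G v * (v:ℂ) ^ (s - 1) * Complex.exp (-(ε * v)))
    (by filter_upwards [self_mem_nhdsWithin] with ε hε using (E ε hε).symm)
  rw [tendsto_nhds_unique L1 L3, ← integral_const_mul]
  congr 1 with u
  ring

theorem hbarRe_mellin_transform_eval
    (h : ℝ → ℂ) (hsm : ContDiff ℝ (⊤ : ℕ∞) h) (hcs : HasCompactSupport h)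
    (hsupp : tsupport h ⊆ Set.Ioi 0) (w : ℂ) (s : ℂ)
    (hs0 : 0 < s.re) (hs1 : s.re < 1) :
    ∫ v in Set.Ioi (0 : ℝ), hbarRe h w v * (v : ℂ) ^ (s - 1) =
      Complex.Gamma s * Complex.cos ((Real.pi : ℂ) * s / 2) *
        ∫ u in Set.Ioi (0 : ℝ),
          h (Real.sqrt u) * ((1 / Real.sqrt (2 * Real.pi * u) : ℝ) : ℂ) *
            (u : ℂ) ^ (w / 2 - s) := by
  obtain ⟨a, ha, hza⟩ : ∃ a : ℝ, 0 < a ∧ ∀ x < a, h x = 0 := by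
    rcases (tsupport h).eq_empty_or_nonempty with he | hne
    · exact ⟨1, one_pos, fun x _ => image_eq_zero_of_notMem_tsupport (by simp [he])⟩
    · obtain ⟨a, ham, hal⟩ := hcs.isCompact.exists_isLeast hne
      exact ⟨a, hsupp ham, fun x hx => image_eq_zero_of_notMem_tsupport
        fun hx' => absurd (hal hx') (not_le.2 hx)⟩
  obtain ⟨b, hb⟩ : ∃ b : ℝ, ∀ x, b < x → h x = 0 := by
    obtain ⟨b, hb⟩ := hcs.isCompact.bddAbove
    exact ⟨b, fun x hx => image_eq_zero_of_notMem_tsupport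
        fun hx' => absurd (hb hx') (not_le.2 hx)⟩
  set g : ℝ → ℂ := fun u => h (Real.sqrt u) * ((1 / Real.sqrt (2 * Real.pi * u) : ℝ) : ℂ) *
      (u : ℂ) ^ (w / 2) with hgdef
  have ha2 : 0 < a ^ 2 := by positivity
  have hz : ∀ u < a ^ 2, g u = 0 := by
    intro u hu
    have : Real.sqrt u < a := (Real.sqrt_lt' ha).2 hu
    simp [hgdef, hza _ this]
  have hgcs : HasCompactSupport g := by
    refine HasCompactSupport.of_support_subset_isCompact (isCompact_Icc (a := a ^ 2) (b := b ^ 2)) ?_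
    intro u hu
    refine ⟨not_lt.1 fun hlt => hu (hz u hlt), not_lt.1 fun hlt => hu ?_⟩
    have : b < Real.sqrt u := Real.lt_sqrt_of_sq_lt hlt
    simp [hgdef, hb _ this]
  have hgsm : ContDiff ℝ 1 g := by
    rw [contDiff_iff_contDiffAt]
    intro u
    rcases lt_or_ge u (a ^ 2) with hu | hu
    · have : g =ᶠ[𝓝 u] fun _ => 0 := by
        filter_upwards [Iio_mem_nhds hu] with x hx using hz x hx
      exact contDiffAt_const.congr_of_eventuallyEq this
    · have hu0 : 0 < u := ha2.trans_le hu
      have h1 : ContDiffAt ℝ 1 (fun u : ℝ => h (Real.sqrt u)) u :=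
        ((hsm.of_le (by exact_mod_cast le_top)).contDiffAt).comp u (Real.contDiffAt_sqrt hu0.ne')
      have h2 : ContDiffAt ℝ 1 (fun u : ℝ => ((1 / Real.sqrt (2 * Real.pi * u) : ℝ) : ℂ)) u := by
        have hp : 0 < 2 * Real.pi * u := by positivity
        refine Complex.ofRealCLM.contDiff.contDiffAt.comp u ?_
        refine contDiffAt_const.div (ContDiffAt.sqrt (by fun_prop) hp.ne') ?_
        exact (Real.sqrt_pos.2 hp).ne'
      have h3 : ContDiffAt ℝ 1 (fun u : ℝ => (u:ℂ) ^ (w / 2)) u := by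
        have hA : AnalyticAt ℂ (fun z : ℂ => z ^ (w / 2)) (u:ℂ) :=
          analyticAt_id.cpow analyticAt_const (Or.inl (by simpa using hu0))
        exact (hA.contDiffAt.restrict_scalars ℝ).comp u Complex.ofRealCLM.contDiff.contDiffAt
      exact (h1.mul h2).mul h3
  have key := aux_main g hgsm hgcs (a ^ 2) ha2 hz s hs0 hs1
  have e1 : ∀ v, hbarRe h w v = ∫ u in Ioi (0:ℝ), g u * ((Real.cos (u * v) : ℝ) : ℂ) :=
    fun v => rfl
  simp_rw [e1]
  rw [key]
  congr 1
  refine setIntegral_congr_fun measurableSet_Ioi fun u hu => ?_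
  have hu' : (u:ℂ) ≠ 0 := by
    have hu : 0 < u := hu
    exact_mod_cast hu.ne'
  simp only [hgdef]
  rw [sub_eq_add_neg, Complex.cpow_add _ _ hu', mul_assoc, mul_assoc, mul_assoc]
end

section
/- Let m₁, m₂, n₂ > 0 be real, let v ∈ ℝ satisfy D := (v+m₂)² + 4v·n₂ > 0 and 2n₂ + m₂ + v > 0, and define f(x) = 2√(x(x+m₁)·n₂(n₂+m₂)) − 2x·n₂ − x·m₂ − n₂·m₁ for x > 0. Then the point x* := m₁·(m₂ + 2n₂ + v − √D)/(2√D) is positive, and the function x ↦ f(x) − v·x has vanishing derivative at x = x*, i.e. f'(x*) = v. -/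
/-- The stationary point of the phase `f(x) − v x`, where
`f(x) = 2√(x(x+m₁) n₂(n₂+m₂)) − 2x n₂ − x m₂ − n₂ m₁`: under the conditions
`D = (v+m₂)² + 4v n₂ > 0` and `2n₂ + m₂ + v > 0`, the point
`x* = m₁ (m₂ + 2n₂ + v − √D)/(2√D)` is positive and `f'(x*) = v`. -/
theorem phase_stationary_point (m₁ m₂ n₂ v : ℝ) (hm₁ : 0 < m₁) (hm₂ : 0 < m₂)
    (hn₂ : 0 < n₂) (hD : 0 < (v + m₂) ^ 2 + 4 * v * n₂)
    (hpos : 0 < 2 * n₂ + m₂ + v) :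
    0 < m₁ * (m₂ + 2 * n₂ + v - Real.sqrt ((v + m₂) ^ 2 + 4 * v * n₂)) /
        (2 * Real.sqrt ((v + m₂) ^ 2 + 4 * v * n₂)) ∧
    HasDerivAt
      (fun x : ℝ =>
        2 * Real.sqrt (x * (x + m₁) * (n₂ * (n₂ + m₂))) - 2 * x * n₂ - x * m₂ - n₂ * m₁)
      v
      (m₁ * (m₂ + 2 * n₂ + v - Real.sqrt ((v + m₂) ^ 2 + 4 * v * n₂)) /
        (2 * Real.sqrt ((v + m₂) ^ 2 + 4 * v * n₂))) := by
  obtain ⟨s, hs⟩ : ∃ s, s = Real.sqrt ((v + m₂) ^ 2 + 4 * v * n₂) := ⟨_, rfl⟩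
  have hs0 : 0 < s := hs ▸ Real.sqrt_pos.mpr hD
  have hs2 : s ^ 2 = (v + m₂) ^ 2 + 4 * v * n₂ := by
    rw [hs]; exact Real.sq_sqrt hD.le
  rw [← hs]
  have hc : 0 < n₂ * (n₂ + m₂) := by positivity
  have hlt : s < m₂ + 2 * n₂ + v := by nlinarith
  have hx : 0 < m₁ * (m₂ + 2 * n₂ + v - s) / (2 * s) :=
    div_pos (mul_pos hm₁ (by linarith)) (by linarith)
  refine ⟨hx, ?_⟩
  obtain ⟨x, hxd⟩ : ∃ x, x = m₁ * (m₂ + 2 * n₂ + v - s) / (2 * s) := ⟨_, rfl⟩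
  rw [← hxd] at hx ⊢
  have hxs : 2 * s * x = m₁ * (m₂ + 2 * n₂ + v - s) := by
    rw [hxd]; field_simp
  have hne : x * (x + m₁) * (n₂ * (n₂ + m₂)) ≠ 0 := by positivity
  have hsq : Real.sqrt (x * (x + m₁) * (n₂ * (n₂ + m₂))) = m₁ * (n₂ * (n₂ + m₂)) / s := by
    rw [show x * (x + m₁) * (n₂ * (n₂ + m₂)) = (m₁ * (n₂ * (n₂ + m₂)) / s) ^ 2 by
      have h1 : (2 * s * x) * (2 * s * x + 2 * s * m₁) = 4 * m₁ ^ 2 * (n₂ * (n₂ + m₂)) := by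
        rw [hxs]; linear_combination (-m₁ ^ 2) * hs2
      field_simp
      linear_combination (1 / 4) * h1]
    exact Real.sqrt_sq (by positivity)
  have hid := hasDerivAt_id' x
  have h := ((((((hid.mul (hid.add_const m₁)).mul_const (n₂ * (n₂ + m₂))).sqrt hne).const_mul
    2).sub ((hid.const_mul 2).mul_const n₂)).sub (hid.mul_const m₂)).sub_const (n₂ * m₁)
  refine h.congr_deriv ?_
  simp only [Pi.mul_apply]
  rw [hsq]
  field_simp
  linear_combination hxs
end

section
/- Let m₁, m₂, n₂ > 0 be real, let v ∈ ℝ satisfy D := (v+m₂)² + 4v·n₂ > 0 and 2n₂ + m₂ + v > 0, define f(x) = 2√(x(x+m₁)·n₂(n₂+m₂)) − 2x·n₂ − x·m₂ − n₂·m₁ for x > 0, and let x* := m₁·(m₂ + 2n₂ + v − √D)/(2√D). Then the value of the phase at the stationary point is f(x*) − v·x* = (m₁/2)·(v + m₂ − √D). -/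
/-- Value of the phase `f(x) − v x` at its stationary point
`x* = m₁ (m₂ + 2n₂ + v − √D)/(2√D)`, where
`f(x) = 2√(x(x+m₁) n₂(n₂+m₂)) − 2x n₂ − x m₂ − n₂ m₁` and `D = (v+m₂)² + 4v n₂`:
`f(x*) − v x* = (m₁/2)(v + m₂ − √D)`. -/
theorem phase_value_at_stationary_point (m₁ m₂ n₂ v : ℝ) (hm₁ : 0 < m₁)
    (hm₂ : 0 < m₂) (hn₂ : 0 < n₂) (hD : 0 < (v + m₂) ^ 2 + 4 * v * n₂)
    (hpos : 0 < 2 * n₂ + m₂ + v) :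
    (fun x : ℝ =>
        2 * Real.sqrt (x * (x + m₁) * (n₂ * (n₂ + m₂))) - 2 * x * n₂ - x * m₂ - n₂ * m₁)
      (m₁ * (m₂ + 2 * n₂ + v - Real.sqrt ((v + m₂) ^ 2 + 4 * v * n₂)) /
        (2 * Real.sqrt ((v + m₂) ^ 2 + 4 * v * n₂))) -
      v * (m₁ * (m₂ + 2 * n₂ + v - Real.sqrt ((v + m₂) ^ 2 + 4 * v * n₂)) /
        (2 * Real.sqrt ((v + m₂) ^ 2 + 4 * v * n₂))) =
      (m₁ / 2) * (v + m₂ - Real.sqrt ((v + m₂) ^ 2 + 4 * v * n₂)) := by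
  have hs : 0 < Real.sqrt ((v + m₂) ^ 2 + 4 * v * n₂) := Real.sqrt_pos.mpr hD
  have hsq : Real.sqrt ((v + m₂) ^ 2 + 4 * v * n₂) ^ 2 = (v + m₂) ^ 2 + 4 * v * n₂ :=
    Real.sq_sqrt hD.le
  generalize Real.sqrt ((v + m₂) ^ 2 + 4 * v * n₂) = s at hs hsq ⊢
  have key : (m₁ * (m₂ + 2 * n₂ + v - s) / (2 * s)) *
      (m₁ * (m₂ + 2 * n₂ + v - s) / (2 * s) + m₁) * (n₂ * (n₂ + m₂)) =
      (m₁ * (n₂ * (n₂ + m₂)) / s) ^ 2 := by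
    field_simp
    linear_combination (-1) * hsq
  have h0 : 0 ≤ m₁ * (n₂ * (n₂ + m₂)) / s := by positivity
  beta_reduce
  rw [key, Real.sqrt_sq h0]
  field_simp
  linear_combination hsq
end

section
/- Let m₁, m₂, n₂ > 0 be real, let v ∈ ℝ satisfy D := (v+m₂)² + 4v·n₂ > 0 and 2n₂ + m₂ + v > 0, define f(x) = 2√(x(x+m₁)·n₂(n₂+m₂)) − 2x·n₂ − x·m₂ − n₂·m₁ for x > 0, and let x* := m₁·(m₂ + 2n₂ + v − √D)/(2√D). Then the second derivative of f at the stationary point equals f''(x*) = −D^{3/2}/(2·m₁·n₂·(n₂+m₂)). -/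
theorem aux_first (m c a b d x : ℝ) (hx : 0 < x * (x + m) * c) :
    HasDerivAt (fun x : ℝ => 2 * Real.sqrt (x * (x + m) * c) - 2 * x * a - x * b - d)
      (c * (2 * x + m) / Real.sqrt (x * (x + m) * c) - 2 * a - b) x := by
  have hR : 0 < Real.sqrt (x * (x + m) * c) := Real.sqrt_pos.mpr hx
  have hg : HasDerivAt (fun x : ℝ => x * (x + m) * c) ((1 * (x + m) + x * 1) * c) x :=
    ((hasDerivAt_id' x).mul ((hasDerivAt_id' x).add_const m)).mul_const c
  have h := (((((hg.sqrt hx.ne').const_mul 2).sub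
    (((hasDerivAt_id' x).const_mul 2).mul_const a)).sub
    ((hasDerivAt_id' x).mul_const b)).sub_const d)
  refine h.congr_deriv ?_
  field_simp
  ring

theorem aux_second (m c a b x : ℝ) (hx : 0 < x * (x + m) * c) :
    HasDerivAt (fun x : ℝ => c * (2 * x + m) / Real.sqrt (x * (x + m) * c) - 2 * a - b)
      (-(c ^ 2 * m ^ 2) / (2 * Real.sqrt (x * (x + m) * c) ^ 3)) x := by
  have hR : 0 < Real.sqrt (x * (x + m) * c) := Real.sqrt_pos.mpr hx
  have hg : HasDerivAt (fun x : ℝ => x * (x + m) * c) ((1 * (x + m) + x * 1) * c) x :=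
    ((hasDerivAt_id' x).mul ((hasDerivAt_id' x).add_const m)).mul_const c
  have hn : HasDerivAt (fun x : ℝ => c * (2 * x + m)) (c * (2 * 1)) x :=
    (((hasDerivAt_id' x).const_mul 2).add_const m).const_mul c
  have h := ((hn.div (hg.sqrt hx.ne') hR.ne').sub_const (2 * a)).sub_const b
  refine h.congr_deriv ?_
  have hsq : Real.sqrt (x * (x + m) * c) ^ 2 = x * (x + m) * c := Real.sq_sqrt hx.le
  generalize Real.sqrt (x * (x + m) * c) = R at *
  have : c * (2 * 1) * R - c * (2 * x + m) * ((1 * (x + m) + x * 1) * c / (2 * R))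
      = -(c ^ 2 * m ^ 2) / (2 * R) := by
    field_simp
    linear_combination 4 * c * hsq
  rw [this]
  field_simp

/-- Second derivative of the phase
`f(x) = 2√(x(x+m₁) n₂(n₂+m₂)) − 2x n₂ − x m₂ − n₂ m₁` at the stationary point
`x* = m₁ (m₂ + 2n₂ + v − √D)/(2√D)`, where `D = (v+m₂)² + 4v n₂`:
`f''(x*) = −D^{3/2}/(2 m₁ n₂ (n₂+m₂))`, with `D^{3/2} = D √D`. -/
theorem phase_second_derivative_at_stationary_point (m₁ m₂ n₂ v : ℝ)
    (hm₁ : 0 < m₁) (hm₂ : 0 < m₂) (hn₂ : 0 < n₂)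
    (hD : 0 < (v + m₂) ^ 2 + 4 * v * n₂) (hpos : 0 < 2 * n₂ + m₂ + v) :
    iteratedDeriv 2
      (fun x : ℝ =>
        2 * Real.sqrt (x * (x + m₁) * (n₂ * (n₂ + m₂))) - 2 * x * n₂ - x * m₂ - n₂ * m₁)
      (m₁ * (m₂ + 2 * n₂ + v - Real.sqrt ((v + m₂) ^ 2 + 4 * v * n₂)) /
        (2 * Real.sqrt ((v + m₂) ^ 2 + 4 * v * n₂))) =
      -(((v + m₂) ^ 2 + 4 * v * n₂) * Real.sqrt ((v + m₂) ^ 2 + 4 * v * n₂)) /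
        (2 * m₁ * n₂ * (n₂ + m₂)) := by
  have hs : 0 < Real.sqrt ((v + m₂) ^ 2 + 4 * v * n₂) := Real.sqrt_pos.mpr hD
  have hs2 : Real.sqrt ((v + m₂) ^ 2 + 4 * v * n₂) ^ 2 = (v + m₂) ^ 2 + 4 * v * n₂ :=
    Real.sq_sqrt hD.le
  generalize Real.sqrt ((v + m₂) ^ 2 + 4 * v * n₂) = s at *
  rw [← hs2]
  obtain ⟨c, hc⟩ : ∃ c, c = n₂ * (n₂ + m₂) := ⟨_, rfl⟩
  have hcpos : 0 < c := by rw [hc]; positivity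
  rw [mul_assoc (2 * m₁), ← hc]
  obtain ⟨x, hx⟩ : ∃ x, x = m₁ * (m₂ + 2 * n₂ + v - s) / (2 * s) := ⟨_, rfl⟩
  rw [← hx]
  have key : x * (x + m₁) * c = (m₁ * c / s) ^ 2 := by
    have h1 : x * (x + m₁) = m₁ ^ 2 * c / s ^ 2 := by
      rw [hx, hc]
      field_simp
      linear_combination (-1) * hs2
    rw [h1]
    field_simp
  have hR : 0 < m₁ * c / s := by positivity
  have hgx : 0 < x * (x + m₁) * c := by rw [key]; positivity
  have hev : ∀ᶠ y in nhds x, 0 < y * (y + m₁) * c := by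
    have hcont : Continuous (fun y : ℝ => y * (y + m₁) * c) := by fun_prop
    exact hcont.continuousAt.eventually (lt_mem_nhds hgx)
  have hd : deriv (fun x : ℝ =>
      2 * Real.sqrt (x * (x + m₁) * c) - 2 * x * n₂ - x * m₂ - n₂ * m₁) =ᶠ[nhds x]
      (fun x : ℝ => c * (2 * x + m₁) / Real.sqrt (x * (x + m₁) * c) - 2 * n₂ - m₂) := by
    filter_upwards [hev] with y hy
    exact (aux_first m₁ c n₂ m₂ (n₂ * m₁) y hy).deriv
  rw [iteratedDeriv_succ, iteratedDeriv_one, hd.deriv_eq,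
    (aux_second m₁ c n₂ m₂ x hgx).deriv, key, Real.sqrt_sq hR.le]
  field_simp
end

section
/- Fix real numbers 0 < a ≤ b. There is a constant C = C(a,b) such that for every integer k ≥ 2 and every s ∈ ℂ with a ≤ Re(s) ≤ b, one has Γ(k+s)/Γ(k) = k^{s}·(1 + R(k,s)) with |R(k,s)| ≤ C·(1+|s|)²/k, where k^{s} = exp(s·log k) and Γ is the Gamma function. -/
open Filter Topology in
lemma aux_norm_Gamma_le {s : ℂ} (hs : 0 < s.re) : ‖Complex.Gamma s‖ ≤ Real.Gamma s.re := by
  rw [Complex.Gamma_eq_integral hs, Complex.GammaIntegral, Real.Gamma_eq_integral hs]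
  refine (MeasureTheory.norm_integral_le_integral_norm _).trans (le_of_eq ?_)
  refine MeasureTheory.setIntegral_congr_fun measurableSet_Ioi fun x hx => ?_
  have hx' : (0 : ℝ) < x := hx
  simp only [norm_mul]
  rw [Complex.norm_of_nonneg (Real.exp_pos _).le, Complex.norm_cpow_eq_rpow_re_of_pos hx']
  simp

lemma aux_Gamma_add_nat (x : ℝ) (hx : 0 < x) (m : ℕ) :
    Real.Gamma (x + m) ≤ (x + m) ^ m * Real.Gamma x := by
  induction m with
  | zero => simp
  | succ m ih =>
    have h0 : 0 < x + m := by positivity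
    have : x + ((m + 1 : ℕ) : ℝ) = (x + m) + 1 := by push_cast; ring
    rw [this, Real.Gamma_add_one h0.ne']
    have hG := Real.Gamma_pos_of_pos hx
    calc (x + m) * Real.Gamma (x + m) ≤ (x + m) * ((x + m) ^ m * Real.Gamma x) := by gcongr
      _ = (x + m) ^ (m + 1) * Real.Gamma x := by ring
      _ ≤ (x + m + 1) ^ (m + 1) * Real.Gamma x :=
          mul_le_mul_of_nonneg_right (pow_le_pow_left₀ h0.le (by linarith) _) hG.le

lemma aux_Gamma_le (m : ℕ) (σ : ℝ) (hσ : 0 < σ) (hm : σ < m) (k : ℝ) (hk : 1 ≤ k) :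
    Real.Gamma (k + σ) ≤ (1 + m : ℝ) ^ m * (Real.Gamma k * k ^ σ) := by
  have hm0 : (0 : ℝ) < m := hσ.trans hm
  have hk0 : 0 < k := by linarith
  have hG := Real.Gamma_pos_of_pos hk0
  have hθ : 0 < σ / m := by positivity
  have hθ1 : 0 < 1 - σ / m := by rw [sub_pos, div_lt_one hm0]; exact hm
  have h := Real.Gamma_mul_add_mul_le_rpow_Gamma_mul_rpow_Gamma hk0
    (by positivity : 0 < k + m) hθ1 hθ (by ring)
  have e : (1 - σ / m) * k + σ / m * (k + m) = k + σ := by field_simp; ring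
  rw [e] at h
  refine h.trans ?_
  have hG2 := Real.Gamma_pos_of_pos (by positivity : 0 < k + m)
  calc Real.Gamma k ^ (1 - σ / m) * Real.Gamma (k + m) ^ (σ / m)
      ≤ Real.Gamma k ^ (1 - σ / m) * ((k + m) ^ m * Real.Gamma k) ^ (σ / m) := by
        gcongr
        exact aux_Gamma_add_nat k hk0 m
    _ = Real.Gamma k * (k + m) ^ σ := by
        rw [Real.mul_rpow (by positivity) hG.le, ← Real.rpow_natCast_mul (by positivity)]
        rw [mul_div_cancel₀ _ hm0.ne', mul_left_comm, ← Real.rpow_add hG]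
        simp [mul_comm]
    _ ≤ Real.Gamma k * ((1 + m) * k) ^ σ := by
        gcongr
        nlinarith
    _ = (1 + m : ℝ) ^ σ * (Real.Gamma k * k ^ σ) := by
        rw [Real.mul_rpow (by positivity) hk0.le]; ring
    _ ≤ (1 + m : ℝ) ^ m * (Real.Gamma k * k ^ σ) := by
        gcongr
        rw [← Real.rpow_natCast]
        exact Real.rpow_le_rpow_of_exponent_le (by linarith) hm.le

lemma aux_h (s : ℂ) (hs : 0 < s.re) (t : ℝ) (ht : 0 ≤ t) :
    ‖(1 + s * t) * ((1 + t : ℝ) : ℂ) ^ (-s) - 1‖ ≤ (1 + ‖s‖) ^ 2 * t ^ 2 := by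
  have hd : ∀ x : ℝ, 0 ≤ x → HasDerivAt
      (fun x : ℝ => (1 + s * x) * ((1 + x : ℝ) : ℂ) ^ (-s) - 1)
      (s * (1 - s) * x * ((1 + x : ℝ) : ℂ) ^ (-s - 1)) x := by
    intro x hx
    have hx1 : ((1 + x : ℝ) : ℂ) ≠ 0 := by
      exact_mod_cast (by positivity : (1 + x) ≠ 0)
    have h1 : HasDerivAt (fun z : ℂ => (1 + s * z) * (1 + z) ^ (-s) - 1)
        (s * (1 - s) * x * ((1 + x : ℝ) : ℂ) ^ (-s - 1)) (x : ℂ) := by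
      have hA : HasDerivAt (fun z : ℂ => 1 + s * z) s (x : ℂ) := by
        simpa using ((hasDerivAt_id (x : ℂ)).const_mul s).const_add 1
      have hB : HasDerivAt (fun z : ℂ => (1 + z) ^ (-s))
          (-s * (1 + x) ^ (-s - 1) * 1) (x : ℂ) := by
        refine HasDerivAt.cpow_const ((hasDerivAt_id (x : ℂ)).const_add 1) ?_
        have : (1 + (x:ℂ)) = ((1 + x : ℝ) : ℂ) := by push_cast; rfl
        show (1 + (x:ℂ)) ∈ Complex.slitPlane
        rw [this, Complex.ofReal_mem_slitPlane]
        positivity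
      refine ((hA.mul hB).sub_const 1).congr_deriv ?_
      push_cast at hx1 ⊢
      have : (1 + (x:ℂ)) ^ (-s) = (1 + x) ^ (-s - 1) * (1 + x) := by
        rw [Complex.cpow_sub _ _ hx1, Complex.cpow_one]; field_simp
      rw [this]; ring
    simpa using h1.comp_ofReal
  have := image_norm_le_of_norm_deriv_right_le_deriv_boundary (a := 0) (b := t)
    (f := fun x : ℝ => (1 + s * x) * ((1 + x : ℝ) : ℂ) ^ (-s) - 1)
    (f' := fun x => s * (1 - s) * x * ((1 + x : ℝ) : ℂ) ^ (-s - 1))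
    (B := fun x => (1 + ‖s‖) ^ 2 * x ^ 2) (B' := fun x => (1 + ‖s‖) ^ 2 * (2 * x))
    (fun x hx => (hd x hx.1).continuousAt.continuousWithinAt)
    (fun x hx => (hd x hx.1).hasDerivWithinAt)
    (by simp)
    (fun x => by simpa using (hasDerivAt_pow 2 x).const_mul ((1 + ‖s‖) ^ 2))
    (fun x hx => by
      have hx0 : 0 ≤ x := hx.1
      have hx1 : 0 < 1 + x := by linarith
      rw [norm_mul, norm_mul, norm_mul, Complex.norm_cpow_eq_rpow_re_of_pos hx1]
      have e1 : (1 + x) ^ (-s - 1).re ≤ 1 := by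
        apply Real.rpow_le_one_of_one_le_of_nonpos (by linarith)
        simp; linarith
      have e2 : ‖1 - s‖ ≤ 1 + ‖s‖ := by simpa using norm_sub_le (1 : ℂ) s
      have e3 : ‖(x : ℂ)‖ = x := by simp [abs_of_nonneg hx0]
      rw [e3]
      calc ‖s‖ * ‖1 - s‖ * x * (1 + x) ^ (-s - 1).re
          ≤ (1 + ‖s‖) * (1 + ‖s‖) * x * 1 := by
            gcongr
            linarith
        _ ≤ _ := by nlinarith [mul_nonneg (sq_nonneg (1 + ‖s‖)) hx0])
  exact this ⟨ht, le_rfl⟩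

lemma aux_prod (s : ℂ) (hs : 0 < s.re) (n : ℕ) :
    Complex.Gamma (n + s) = Complex.Gamma s * ∏ j ∈ Finset.range n, (s + j) := by
  induction n with
  | zero => simp
  | succ n ih =>
    have h0 : (n : ℂ) + s ≠ 0 := by
      intro h
      have := congrArg Complex.re h
      simp at this
      have : (0:ℝ) ≤ n := Nat.cast_nonneg n
      linarith
    rw [Finset.prod_range_succ, ← mul_assoc, ← ih, mul_comm, add_comm s, 
      ← Complex.Gamma_add_one _ h0]
    push_cast; ring_nf

open Filter Topology in
lemma aux_lim (s : ℂ) (hs : 0 < s.re) :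
    Tendsto (fun n : ℕ => Complex.Gamma (n + s) / (Complex.Gamma n * (n : ℂ) ^ s)) atTop (𝓝 1) := by
  have hG : Complex.Gamma s ≠ 0 := Complex.Gamma_ne_zero_of_re_pos hs
  have h1 : Tendsto (fun n : ℕ => Complex.Gamma s / Complex.GammaSeq s n) atTop (𝓝 1) := by
    have := (tendsto_const_nhds (x := Complex.Gamma s)).div
      (Complex.GammaSeq_tendsto_Gamma s) hG
    rw [div_self hG] at this
    exact this
  have h2 : Tendsto (fun n : ℕ => 1 + s / (n : ℂ)) atTop (𝓝 1) := by
    simpa using (tendsto_const_div_atTop_nhds_zero_nat s).const_add 1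
  have h3 := h1.div h2 one_ne_zero
  rw [div_one] at h3
  refine h3.congr' ?_
  filter_upwards [eventually_ge_atTop 1] with n hn
  obtain ⟨m, rfl⟩ : ∃ m, n = m + 1 := ⟨n - 1, by omega⟩
  have hn0 : ((m + 1 : ℕ) : ℂ) ≠ 0 := by exact_mod_cast Nat.succ_ne_zero m
  have hsn : ((m + 1 : ℕ) : ℂ) + s ≠ 0 := by
    intro h
    have := congrArg Complex.re h
    simp at this
    have : (0:ℝ) ≤ m := Nat.cast_nonneg m
    linarith
  have hp : ((m + 1 : ℕ) : ℂ) ^ s ≠ 0 := by rw [Ne, Complex.cpow_eq_zero_iff]; tauto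
  have hf : (m.factorial : ℂ) ≠ 0 := by exact_mod_cast m.factorial_ne_zero
  have hgm : Complex.Gamma ((m + 1 : ℕ) : ℂ) = m.factorial := by
    push_cast; exact Complex.Gamma_nat_eq_factorial m
  have hsn' : 1 + s / ((m + 1 : ℕ) : ℂ) = (((m + 1 : ℕ) : ℂ) + s) / ((m + 1 : ℕ) : ℂ) := by
    field_simp
  have hfs : ((m + 1).factorial : ℂ) = ((m + 1 : ℕ) : ℂ) * m.factorial := by
    rw [Nat.factorial_succ]; push_cast; ring
  simp only [Pi.div_apply]
  rw [hgm, hsn', aux_prod s hs, Complex.GammaSeq, Finset.prod_range_succ, hfs,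
    add_comm s ((m + 1 : ℕ) : ℂ)]
  generalize ((m + 1 : ℕ) : ℂ) = N at *
  generalize (∏ j ∈ Finset.range (m + 1), (s + (j : ℂ))) = P
  field_simp

lemma aux_step (s : ℂ) (hs : 0 < s.re) (n : ℕ) (hn : 1 ≤ n) :
    Complex.Gamma ((n + 1 : ℕ) + s) / (Complex.Gamma (n + 1 : ℕ) * ((n + 1 : ℕ) : ℂ) ^ s)
      = Complex.Gamma (n + s) / (Complex.Gamma n * (n : ℂ) ^ s) *
        ((1 + s * (1 / n : ℝ)) * ((1 + 1 / n : ℝ) : ℂ) ^ (-s)) := by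
  have hnR : (0 : ℝ) < n := by exact_mod_cast hn
  have hn0 : (n : ℂ) ≠ 0 := by exact_mod_cast hnR.ne'
  have h0 : (n : ℂ) + s ≠ 0 := by
    intro h
    have := congrArg Complex.re h
    simp at this
    linarith
  have e1 : ((n + 1 : ℕ) : ℂ) + s = (n + s) + 1 := by push_cast; ring
  have e2 : Complex.Gamma ((n + 1 : ℕ) : ℂ) = n * Complex.Gamma n := by
    push_cast; exact Complex.Gamma_add_one _ hn0
  have hpos : (0 : ℝ) < 1 + 1 / n := by positivity
  have e3 : ((n + 1 : ℕ) : ℂ) ^ s = (n : ℂ) ^ s * ((1 + 1 / n : ℝ) : ℂ) ^ s := by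
    have := Complex.mul_cpow_ofReal_nonneg hnR.le hpos.le s
    rw [Complex.ofReal_natCast] at this
    rw [← this]
    congr 1
    push_cast
    field_simp
  have hq : ((1 + 1 / n : ℝ) : ℂ) ^ s ≠ 0 := by
    have : ((1 + 1 / n : ℝ) : ℂ) ≠ 0 := by exact_mod_cast hpos.ne'
    rw [Ne, Complex.cpow_eq_zero_iff]; tauto
  have hp : (n : ℂ) ^ s ≠ 0 := by simp [Complex.cpow_eq_zero_iff, hn0]
  have hg : Complex.Gamma n ≠ 0 := Complex.Gamma_ne_zero_of_re_pos (by simpa using hnR)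
  rw [e1, e2, e3, Complex.Gamma_add_one _ h0, Complex.cpow_neg]
  generalize ((1 + 1 / n : ℝ) : ℂ) ^ s = q at *
  push_cast
  field_simp

/-- Stirling-type asymptotic for a ratio of Gamma functions in a vertical strip:
for fixed `0 < a ≤ b` there is a constant `C = C(a,b)` such that for every integer
`k ≥ 2` and every `s ∈ ℂ` with `a ≤ Re s ≤ b`,
`Γ(k+s)/Γ(k) = k^s (1 + R(k,s))` with `|R(k,s)| ≤ C (1+|s|)²/k`. -/
theorem gamma_ratio_stirling_strip (a b : ℝ) (ha : 0 < a) (hab : a ≤ b) :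
    ∃ C : ℝ, ∀ k : ℕ, 2 ≤ k → ∀ s : ℂ, a ≤ s.re → s.re ≤ b →
      ∃ R : ℂ,
        Complex.Gamma ((k : ℂ) + s) / Complex.Gamma (k : ℂ) = (k : ℂ) ^ s * (1 + R) ∧
        ‖R‖ ≤ C * (1 + ‖s‖) ^ 2 / (k : ℝ) := by
  obtain ⟨m, hm⟩ := exists_nat_gt b
  refine ⟨(1 + m : ℝ) ^ m * 2, fun k hk s hsa hsb => ?_⟩
  have hs : 0 < s.re := by linarith
  set F : ℕ → ℂ := fun n => Complex.Gamma (n + s) / (Complex.Gamma n * (n : ℂ) ^ s) with hF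
  have hkR : (0 : ℝ) < k := by exact_mod_cast (by omega : 0 < k)
  have hk0 : (k : ℂ) ≠ 0 := by exact_mod_cast hkR.ne'
  have hFb : ∀ n : ℕ, 1 ≤ n → ‖F n‖ ≤ (1 + m : ℝ) ^ m := by
    intro n hn
    have hnR : (1 : ℝ) ≤ n := by exact_mod_cast hn
    have hn0 : (0 : ℝ) < n := by linarith
    have hG := Real.Gamma_pos_of_pos hn0
    have h1 : ‖Complex.Gamma n‖ = Real.Gamma n := by
      rw [← Complex.ofReal_natCast, Complex.Gamma_ofReal, Complex.norm_of_nonneg hG.le]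
    have h2 : ‖(n : ℂ) ^ s‖ = (n : ℝ) ^ s.re := by
      rw [← Complex.ofReal_natCast, Complex.norm_cpow_eq_rpow_re_of_pos hn0]
    simp only [hF]
    rw [norm_div, norm_mul, h1, h2, div_le_iff₀ (by positivity)]
    refine (aux_norm_Gamma_le (by simp; linarith)).trans ?_
    simpa using aux_Gamma_le m s.re hs (by linarith) n hnR
  set M : ℝ := (1 + m : ℝ) ^ m * (1 + ‖s‖) ^ 2 with hM
  have hM0 : 0 ≤ M := by positivity
  have hstep : ∀ n : ℕ, 1 ≤ n → ‖F (n + 1) - F n‖ ≤ M * (2 / n - 2 / (n + 1)) := by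
    intro n hn
    have hnR : (1 : ℝ) ≤ n := by exact_mod_cast hn
    have h := aux_step s hs n hn
    have hh := aux_h s hs (1 / n) (by positivity)
    have : F (n + 1) - F n = F n *
        ((1 + s * (1 / n : ℝ)) * ((1 + 1 / n : ℝ) : ℂ) ^ (-s) - 1) := by
      simp only [hF]; rw [h]; ring
    rw [this, norm_mul]
    calc _ ≤ (1 + m : ℝ) ^ m * ((1 + ‖s‖) ^ 2 * (1 / n) ^ 2) := by
          gcongr
          exact hFb n hn
      _ = M * (1 / n) ^ 2 := by rw [hM]; ring
      _ ≤ _ := by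
          gcongr
          rw [div_sub_div _ _ (by positivity) (by positivity), div_pow,
            div_le_div_iff₀ (by positivity) (by positivity)]
          nlinarith
  have hsum : ∀ j : ℕ, ‖F (j + k) - F k‖ ≤ M * (2 / k - 2 / ((j + k : ℕ) : ℝ)) := by
    intro j
    induction j with
    | zero => simp
    | succ j ih =>
      have h := hstep (j + k) (by omega)
      have e : F (j + 1 + k) - F k = (F (j + k + 1) - F (j + k)) + (F (j + k) - F k) := by
        rw [show j + 1 + k = j + k + 1 by ring]; ring
      rw [e]
      refine (norm_add_le _ _).trans ((add_le_add h ih).trans (le_of_eq ?_))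
      rw [show j + 1 + k = j + k + 1 by ring]
      push_cast
      ring
  have hlim : ‖1 - F k‖ ≤ M * (2 / k) := by
    have hl := ((Filter.tendsto_add_atTop_iff_nat k).2 (aux_lim s hs)).sub_const (F k) |>.norm
    refine le_of_tendsto hl (Filter.Eventually.of_forall fun j => (hsum j).trans ?_)
    gcongr
    have : (0 : ℝ) ≤ 2 / ((j + k : ℕ) : ℝ) := by positivity
    linarith
  refine ⟨F k - 1, ?_, ?_⟩
  · have hp : (k : ℂ) ^ s ≠ 0 := by simp [Complex.cpow_eq_zero_iff, hk0]
    have hg : Complex.Gamma k ≠ 0 := Complex.Gamma_ne_zero_of_re_pos (by simpa using hkR)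
    simp only [hF]
    field_simp
    ring
  · rw [norm_sub_rev]
    refine hlim.trans (le_of_eq ?_)
    rw [hM]; ring
end
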